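/- arXiv:0912.1329 — 3 statements merged into one kernel-verified Lean document; each statement's English description precedes it below -/
import Mathlib

section
/- For every integer m ≥ 2 and reals T > 0 and R > 0, consider the machine-activation instance with m machines A_1, …, A_{m−1}, B and m jobs, where machine A_i has activation cost 1 and processing time T for every job, and machine B has activation cost R and processing time T/m for every job. Then: (1) every integral schedule (an assignment of all m jobs to a subset S of activated machines such that each machine's total processing time is at most T) must activate machine B, and hence has activation cost at least R; and (2) the LP relaxation with makespan budget T admits a feasible fractional solution of cost at most (m − 1) + R/m, namely y_{A_i} = 1 for all i, y_B = 1/m, x_{A_i, j} = 1/m and x_{B, j} = 1/m for all jobs j. Consequently the integrality gap of the LP with strict makespan budget T is at least R/((m−1) + R/m), which tends to m as R → ∞. -/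
/-!
Without `B`, the `m` jobs must fit on `m - 1` machines each of which can finish only one job within
the budget, which the pigeonhole principle forbids. Fractionally, `m` jobs spread evenly over all
`m` machines load each `A_i` by exactly `T`, and load `B` by only `T / m`, so that opening `B` to
the extent `1 / m` suffices.
-/

namespace MachineActivation

variable {M J K : Type*}

/-- `σ` is an integral schedule on the activated machines `S`: with processing times `p`, it assigns
every job to a machine of `S` and loads every machine by at most the makespan budget `T`. -/
structure IsSchedule [Fintype J] [DecidableEq M] [AddCommMonoid K] [LE K]
    (p : M → J → K) (T : K) (S : Finset M) (σ : J → M) : Prop where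
  mem : ∀ j, σ j ∈ S
  load_le : ∀ i, ∑ j with σ j = i, p i j ≤ T

/-- `(y, x)` is feasible for the LP relaxation with processing times `p` and makespan budget `T`:
`y i` is the extent to which machine `i` is activated and `x i j` the fraction of job `j` that it
processes. -/
structure IsFractionalSolution [Fintype M] [Fintype J] [Semiring K] [LE K]
    (p : M → J → K) (T : K) (y : M → K) (x : M → J → K) : Prop where
  activation_mem : ∀ i, 0 ≤ y i ∧ y i ≤ 1
  assignment_mem : ∀ i j, 0 ≤ x i j ∧ x i j ≤ 1
  sum_assignment : ∀ j, ∑ i, x i j = 1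
  assignment_le : ∀ i j, x i j ≤ y i
  load_le : ∀ i, ∑ j, p i j * x i j ≤ T * y i

section Schedule

variable [Fintype J] [DecidableEq M] [AddCommMonoid K] [PartialOrder K] [IsOrderedAddMonoid K]
  {p : M → J → K} {T : K} {S : Finset M} {σ : J → M}

theorem IsSchedule.injective (hσ : IsSchedule p T S σ) (hp : ∀ i ∈ S, ∀ j, 0 ≤ p i j)
    (hpair : ∀ i ∈ S, ∀ j k, j ≠ k → T < p i j + p i k) : Function.Injective σ := by
  intro j k hjk
  by_contra hne
  have pair_le_load : p (σ j) j + p (σ j) k ≤ ∑ l with σ l = σ j, p (σ j) l :=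
    Finset.add_le_sum (fun l _ => hp (σ j) (hσ.mem j) l) (by simp) (by simp [hjk]) hne
  exact (hpair (σ j) (hσ.mem j) j k hne).not_ge (pair_le_load.trans (hσ.load_le (σ j)))

theorem IsSchedule.card_le_card (hσ : IsSchedule p T S σ) (hp : ∀ i ∈ S, ∀ j, 0 ≤ p i j)
    (hpair : ∀ i ∈ S, ∀ j k, j ≠ k → T < p i j + p i k) : Fintype.card J ≤ S.card :=
  Finset.card_le_card_of_injOn σ (fun j _ => hσ.mem j) (hσ.injective hp hpair).injOn

theorem IsSchedule.mem_of_card_le [Fintype M] {b : M} (hσ : IsSchedule p T S σ)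
    (hp : ∀ i ≠ b, ∀ j, 0 ≤ p i j) (hpair : ∀ i ≠ b, ∀ j k, j ≠ k → T < p i j + p i k)
    (hcard : Fintype.card M ≤ Fintype.card J) : b ∈ S := by
  by_contra hb
  have ne_b : ∀ i ∈ S, i ≠ b := fun i hi => ne_of_mem_of_not_mem hi hb
  have card_jobs_le : Fintype.card J ≤ S.card :=
    hσ.card_le_card (fun i hi => hp i (ne_b i hi)) fun i hi => hpair i (ne_b i hi)
  exact (Finset.card_lt_univ_of_notMem hb).not_ge (hcard.trans card_jobs_le)

end Schedule

theorem isFractionalSolution_const [Fintype M] [Fintype J] [Semiring K] [LinearOrder K]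
    [IsStrictOrderedRing K] {p : M → J → K} {T c : K} {y : M → K}
    (hc : Fintype.card M * c = 1) (hcy : ∀ i, c ≤ y i) (hy : ∀ i, y i ≤ 1)
    (hload : ∀ i, (∑ j, p i j) * c ≤ T * y i) :
    IsFractionalSolution p T y fun _ _ => c := by
  have c_nonneg : 0 ≤ c :=
    (pos_of_mul_pos_right (hc ▸ zero_lt_one) (Nat.cast_nonneg _)).le
  exact
    { activation_mem := fun i => ⟨c_nonneg.trans (hcy i), hy i⟩
      assignment_mem := fun i _ => ⟨c_nonneg, (hcy i).trans (hy i)⟩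
      sum_assignment := fun _ => by simpa using hc
      assignment_le := fun i _ => hcy i
      load_le := fun i => by simpa only [Finset.sum_mul] using hload i }

theorem sum_ite_eq_else_one [Fintype M] [DecidableEq M] [AddCommGroupWithOne K] (b : M) (c : K) :
    ∑ i, (if i = b then c else 1) = (Fintype.card M - 1) + c := by
  have ite_eq (i : M) : (if i = b then c else 1) = 1 + if i = b then c - 1 else 0 := by
    split_ifs <;> simp
  simp only [ite_eq, Finset.sum_add_distrib, Finset.sum_ite_eq', Finset.mem_univ, if_true,
    Finset.sum_const, Finset.card_univ, nsmul_one]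
  abel

end MachineActivation

open MachineActivation

/-- Integrality gap instance. Machines `A_1, …, A_{m-1}` (activation cost 1,
processing time `T` for every job) and machine `B` (activation cost `R`, processing time
`T/m` for every job), with `m` jobs. (1) Every integral schedule with makespan budget `T`
must activate `B`, hence costs at least `R`. (2) The y/x values
`y_{A_i} = 1, y_B = 1/m, x_{i,j} = 1/m` form a feasible fractional LP solution of cost at
most `(m-1) + R/m`. -/
theorem stmt3 (m : ℕ) (hm : 2 ≤ m) (T R : ℝ) (hT : 0 < T) (hR : 0 < R) :
    let B : Fin m := ⟨m - 1, by omega⟩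
    let a : Fin m → ℝ := fun i => if i = B then R else 1
    let p : Fin m → Fin m → ℝ := fun i _ => if i = B then T / m else T
    -- (1): every integral schedule with makespan at most `T` activates `B`
    (∀ (S : Finset (Fin m)) (σ : Fin m → Fin m),
        (∀ j, σ j ∈ S) →
        (∀ i, (∑ j ∈ Finset.univ.filter (fun j => σ j = i), p i j) ≤ T) →
        B ∈ S ∧ R ≤ ∑ i ∈ S, a i) ∧
    -- (2): the LP has a feasible fractional solution of cost at most `(m-1) + R/m`
    (let y : Fin m → ℝ := fun i => if i = B then 1 / m else 1
     let x : Fin m → Fin m → ℝ := fun _ _ => 1 / m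
     (∀ i, 0 ≤ y i ∧ y i ≤ 1) ∧
     (∀ i j, 0 ≤ x i j ∧ x i j ≤ 1) ∧
     (∀ j, ∑ i, x i j = 1) ∧
     (∀ i j, x i j ≤ y i) ∧
     (∀ i, ∑ j, p i j * x i j ≤ T * y i) ∧
     ∑ i, a i * y i ≤ (m - 1 : ℝ) + R / m) := by
  intro B a p
  have hm_pos : (0 : ℝ) < m := by positivity
  refine ⟨fun S σ hS hload => ?_, ?_⟩
  · have a_nonneg : ∀ i, 0 ≤ a i := fun i => by positivity
    have B_mem : B ∈ S := IsSchedule.mem_of_card_le ⟨hS, hload⟩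
      (fun i hi j => by simpa [p, hi] using hT.le) (fun i hi j k _ => by simpa [p, hi] using hT)
      le_rfl
    have cost_ge : a B ≤ ∑ i ∈ S, a i := Finset.single_le_sum (fun i _ => a_nonneg i) B_mem
    exact ⟨B_mem, by simpa [a] using cost_ge⟩
  · intro y x
    have feasible : IsFractionalSolution p T y x := by
      refine isFractionalSolution_const (by simp [hm_pos.ne']) (fun i => ?_) (fun i => ?_)
        fun i => ?_
      · by_cases hi : i = B <;> simp [y, hi, Nat.cast_inv_le_one]
      · by_cases hi : i = B <;> simp [y, hi, Nat.cast_inv_le_one]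
      · by_cases hi : i = B <;> simp [p, y, hi, field]
    have cost_eq : ∑ i, a i * y i = (m - 1 : ℝ) + R / m := by
      have term_eq (i : Fin m) : a i * y i = if i = B then R / m else 1 := by
        by_cases hi : i = B <;> simp [a, y, hi, div_eq_mul_inv]
      simpa only [term_eq, Fintype.card_fin] using sum_ite_eq_else_one B (R / m)
    exact ⟨feasible.activation_mem, feasible.assignment_mem, feasible.sum_assignment,
      feasible.assignment_le, feasible.load_le, cost_eq.le⟩
end

section
/- Let k ≥ 4 be an even integer, representing an even cycle v_0, v_1, …, v_k = v_0 in a bipartite graph whose machine nodes are the v_t with even t and whose job nodes are the v_t with odd t, and whose edges are e_t = (v_{t−1}, v_t) for t = 1,…,k. Let p_1, …, p_k > 0 be processing times on the edges, let c_1, …, c_k > 0 be caps, and let Z_1, …, Z_k satisfy 0 < Z_t < c_t for all t. Then there exists a nonzero vector μ = (μ_1, …, μ_k) ∈ ℝ^k such that: (i) for every odd t with 1 ≤ t ≤ k−1 (job node v_t), μ_{t+1} = −μ_t; (ii) for every even t with 2 ≤ t ≤ k−2 (machine node v_t), p_t·μ_t + p_{t+1}·μ_{t+1} = 0; (iii)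 0 ≤ Z_t + μ_t ≤ c_t for every t; (iv) Z_t + μ_t ∈ {0, c_t} for at least one t; and (v) p_1·μ_1 + p_k·μ_k ≤ 0, i.e., the load on the machine node v_0 = v_k does not increase. -/
/-!
The balance conditions at the nodes `v_1, …, v_{k-1}` are `k - 1` homogeneous linear equations in
`k` unknowns, so they have a nonzero solution `ν`. After possibly replacing `ν` by `-ν`, moving
along it does not increase the load of the closing node. Since `Z` lies in the interior of the box
`∏ [0, c_t]`, the ray `Z + ε ν` leaves the box at some `ε > 0`, and its exit point is `Z + μ`.
-/

section LinearAlgebra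

variable {K ι W : Type*} [DivisionRing K] [AddCommGroup W] [Module K W] [FiniteDimensional K W]

lemma exists_map_eq_zero_of_finrank_lt_card {s : Finset ι}
    (A : (ι → K) →ₗ[K] W) (hA : Module.finrank K W < s.card) :
    ∃ ν : ι → K, (∃ i ∈ s, ν i ≠ 0) ∧ A ν = 0 := by
  let extendByZero : (s → K) →ₗ[K] (ι → K) := Function.ExtendByZero.linearMap K Subtype.val
  have ker_ne_bot : LinearMap.ker (A ∘ₗ extendByZero) ≠ ⊥ :=
    LinearMap.ker_ne_bot_of_finrank_lt (by simpa using hA)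
  obtain ⟨ν, hν, ν_ne_zero⟩ := Submodule.exists_mem_ne_zero_of_ne_bot ker_ne_bot
  obtain ⟨i, hi⟩ := Function.ne_iff.mp ν_ne_zero
  refine ⟨extendByZero ν, ⟨i, i.2, ?_⟩, hν⟩
  rwa [show extendByZero ν i = ν i from Subtype.val_injective.extend_apply ν 0 i]

end LinearAlgebra

section OrderedField

variable {K : Type*} [Field K] [LinearOrder K]

section IntervalGauge

/-- The Minkowski gauge of the interval `[l, u]` seen from its interior point `x`: the factor by
which the interval must be dilated about `x` to have `x + v` as an endpoint. The formula is
meaningful only for `l < x < u`. -/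
def intervalGauge (l u x v : K) : K :=
  max (v / (u - x)) (-v / (x - l))

variable [IsStrictOrderedRing K] {l u x v : K}

lemma intervalGauge_mul {ε : K} (hε : 0 ≤ ε) :
    intervalGauge l u x (ε * v) = ε * intervalGauge l u x v := by
  simp only [intervalGauge, mul_max_of_nonneg _ _ hε, ← mul_neg, mul_div_assoc]

lemma intervalGauge_pos (hx : x ∈ Set.Ioo l u) (hv : v ≠ 0) : 0 < intervalGauge l u x v := by
  rcases hv.lt_or_gt with v_neg | v_pos
  · exact lt_max_of_lt_right (div_pos (neg_pos.mpr v_neg) (sub_pos.mpr hx.1))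
  · exact lt_max_of_lt_left (div_pos v_pos (sub_pos.mpr hx.2))

lemma intervalGauge_le_one_iff (hx : x ∈ Set.Ioo l u) :
    intervalGauge l u x v ≤ 1 ↔ x + v ∈ Set.Icc l u := by
  rw [intervalGauge, max_le_iff, div_le_one (sub_pos.mpr hx.2), div_le_one (sub_pos.mpr hx.1),
    Set.mem_Icc, and_comm, neg_le_sub_iff_le_add, le_sub_iff_add_le']

lemma eq_endpoint_of_intervalGauge_eq_one (hx : x ∈ Set.Ioo l u)
    (h : intervalGauge l u x v = 1) : x + v = l ∨ x + v = u := by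
  rcases max_choice (v / (u - x)) (-v / (x - l)) with hmax | hmax
  · have hv : v = u - x := (div_eq_one_iff_eq (sub_pos.mpr hx.2).ne').mp (hmax.symm.trans h)
    exact Or.inr (by linarith)
  · have hv : -v = x - l := (div_eq_one_iff_eq (sub_pos.mpr hx.1).ne').mp (hmax.symm.trans h)
    exact Or.inl (by linarith)

end IntervalGauge

section Box

variable [IsStrictOrderedRing K] {ι : Type*} {s : Finset ι} {l u x : ι → K}

theorem exists_pos_add_mul_mem_Icc_and_eq_endpoint (hx : ∀ i ∈ s, x i ∈ Set.Ioo (l i) (u i))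
    {ν : ι → K} (hν : ∃ i ∈ s, ν i ≠ 0) :
    ∃ ε > 0, (∀ i ∈ s, x i + ε * ν i ∈ Set.Icc (l i) (u i)) ∧
      ∃ i ∈ s, x i + ε * ν i = l i ∨ x i + ε * ν i = u i := by
  obtain ⟨j, hj, hνj⟩ := hν
  let gauge (i : ι) : K := intervalGauge (l i) (u i) (x i) (ν i)
  obtain ⟨m, hm, gauge_le⟩ := s.exists_max_image gauge ⟨j, hj⟩
  have gauge_pos : 0 < gauge m := (intervalGauge_pos (hx j hj) hνj).trans_le (gauge_le j hj)
  have hε : 0 < (gauge m)⁻¹ := inv_pos.mpr gauge_pos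
  refine ⟨(gauge m)⁻¹, hε, fun i hi ↦ ?_, m, hm, ?_⟩
  · rw [← intervalGauge_le_one_iff (hx i hi), intervalGauge_mul hε.le]
    exact inv_mul_le_one_of_le₀ (gauge_le i hi) gauge_pos.le
  · apply eq_endpoint_of_intervalGauge_eq_one (hx m hm)
    rw [intervalGauge_mul hε.le]
    exact inv_mul_cancel₀ gauge_pos.ne'

variable {W : Type*} [AddCommGroup W] [Module K W] [FiniteDimensional K W]

theorem exists_map_eq_zero_and_add_mem_Icc_and_eq_endpoint (A : (ι → K) →ₗ[K] W)
    (hA : Module.finrank K W < s.card) (f : (ι → K) →ₗ[K] K)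
    (hx : ∀ i ∈ s, x i ∈ Set.Ioo (l i) (u i)) :
    ∃ μ : ι → K, (∃ i ∈ s, μ i ≠ 0) ∧ A μ = 0 ∧ f μ ≤ 0 ∧
      (∀ i ∈ s, x i + μ i ∈ Set.Icc (l i) (u i)) ∧
      ∃ i ∈ s, x i + μ i = l i ∨ x i + μ i = u i := by
  obtain ⟨ν, hν, hAν, hfν⟩ : ∃ ν : ι → K, (∃ i ∈ s, ν i ≠ 0) ∧ A ν = 0 ∧ f ν ≤ 0 := by
    obtain ⟨ν, hν, hAν⟩ := exists_map_eq_zero_of_finrank_lt_card A hA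
    rcases le_total (f ν) 0 with hfν | hfν
    · exact ⟨ν, hν, hAν, hfν⟩
    · exact ⟨-ν, by simpa using hν, by simpa using hAν, by simpa using hfν⟩
  obtain ⟨ε, hε, hmem, hend⟩ := exists_pos_add_mul_mem_Icc_and_eq_endpoint hx hν
  obtain ⟨i, hi, hνi⟩ := hν
  refine ⟨ε • ν, ⟨i, hi, mul_ne_zero hε.ne' hνi⟩, ?_, ?_, hmem, hend⟩
  · rw [map_smul, hAν, smul_zero]
  · rw [map_smul]
    exact mul_nonpos_of_nonneg_of_nonpos hε.le hfν

end Box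

end OrderedField

section NodeChange

variable {K : Type*} [CommSemiring K]

/-- The change caused by an increment vector `μ` at the node `v_t` between the edges `e_t` and
`e_{t+1}`: of the total assignment if `v_t` is a job node (`t` odd), of the load if it is a machine
node (`t` even). -/
def nodeChange (p : ℕ → K) (t : ℕ) : (ℕ → K) →ₗ[K] K :=
  let edge : ℕ → (ℕ → K) →ₗ[K] K := LinearMap.proj
  if Odd t then edge t + edge (t + 1) else p t • edge t + p (t + 1) • edge (t + 1)

lemma nodeChange_of_odd (p μ : ℕ → K) {t : ℕ} (ht : Odd t) :
    nodeChange p t μ = μ t + μ (t + 1) := by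
  simp [nodeChange, ht]

lemma nodeChange_of_even (p μ : ℕ → K) {t : ℕ} (ht : Even t) :
    nodeChange p t μ = p t * μ t + p (t + 1) * μ (t + 1) := by
  simp [nodeChange, Nat.not_odd_iff_even.mpr ht]

end NodeChange

theorem stmt6_general {K : Type*} [Field K] [LinearOrder K] [IsStrictOrderedRing K]
    (k : ℕ) (hk : 1 ≤ k) (p c Z : ℕ → K) (hZ : ∀ t, 1 ≤ t → t ≤ k → 0 < Z t ∧ Z t < c t) :
    ∃ μ : ℕ → K,
      (∃ t, 1 ≤ t ∧ t ≤ k ∧ μ t ≠ 0) ∧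
      (∀ t, Odd t → t < k → μ (t + 1) = -μ t) ∧
      (∀ t, Even t → 2 ≤ t → t < k → p t * μ t + p (t + 1) * μ (t + 1) = 0) ∧
      (∀ t, 1 ≤ t → t ≤ k → 0 ≤ Z t + μ t ∧ Z t + μ t ≤ c t) ∧
      (∃ t, 1 ≤ t ∧ t ≤ k ∧ (Z t + μ t = 0 ∨ Z t + μ t = c t)) ∧
      p 1 * μ 1 + p k * μ k ≤ 0 := by
  let innerChange : (ℕ → K) →ₗ[K] (Finset.Ico 1 k → K) :=
    LinearMap.pi fun t ↦ nodeChange p t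
  let closingChange : (ℕ → K) →ₗ[K] K := p 1 • LinearMap.proj 1 + p k • LinearMap.proj k
  have finrank_lt : Module.finrank K (Finset.Ico 1 k → K) < (Finset.Icc 1 k).card := by
    simp only [Module.finrank_fintype_fun_eq_card, Fintype.card_coe, Nat.card_Ico, Nat.card_Icc]
    omega
  obtain ⟨μ, hne, hinner, hclosing, hmem, hend⟩ :=
    exists_map_eq_zero_and_add_mem_Icc_and_eq_endpoint (l := 0) (u := c) (x := Z)
      innerChange finrank_lt closingChange
      (fun t ht ↦ hZ t (Finset.mem_Icc.mp ht).1 (Finset.mem_Icc.mp ht).2)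
  have hnode (t : ℕ) (h1 : 1 ≤ t) (htk : t < k) : nodeChange p t μ = 0 :=
    congrFun hinner ⟨t, Finset.mem_Ico.mpr ⟨h1, htk⟩⟩
  simp only [Finset.mem_Icc, and_assoc] at hne hend
  refine ⟨μ, hne, fun t ht htk ↦ ?_, fun t ht h2 htk ↦ ?_,
    fun t h1 htk ↦ hmem t (Finset.mem_Icc.mpr ⟨h1, htk⟩), hend, hclosing⟩
  · exact eq_neg_of_add_eq_zero_right (nodeChange_of_odd p μ ht ▸ hnode t ht.pos htk)
  · exact nodeChange_of_even p μ ht ▸ hnode t (by omega) htk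

/-- Cycle-breaking along an even cycle `v_0, v_1, …, v_k = v_0` with edges
`e_t = (v_{t-1}, v_t)`, `t = 1, …, k`: given processing times `p_t > 0`, caps `c_t > 0`
and values `0 < Z_t < c_t`, there is a nonzero increment vector `μ` preserving each job
node's assignment (odd `t`: `μ_{t+1} = −μ_t`), preserving each internal machine node's
load (even `t`: `p_t μ_t + p_{t+1} μ_{t+1} = 0`), keeping all values in `[0, c_t]`,
rounding at least one value to a boundary, and not increasing the load of the closing
machine node (`p_1 μ_1 + p_k μ_k ≤ 0`). -/
theorem stmt6 (k : ℕ) (hk : 4 ≤ k) (hkeven : Even k)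
    (p c Z : ℕ → ℝ)
    (hp : ∀ t, 1 ≤ t → t ≤ k → 0 < p t)
    (hc : ∀ t, 1 ≤ t → t ≤ k → 0 < c t)
    (hZ : ∀ t, 1 ≤ t → t ≤ k → 0 < Z t ∧ Z t < c t) :
    ∃ μ : ℕ → ℝ,
      (∃ t, 1 ≤ t ∧ t ≤ k ∧ μ t ≠ 0) ∧
      (∀ t, Odd t → 1 ≤ t → t ≤ k - 1 → μ (t + 1) = -μ t) ∧
      (∀ t, Even t → 2 ≤ t → t ≤ k - 2 → p t * μ t + p (t + 1) * μ (t + 1) = 0) ∧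
      (∀ t, 1 ≤ t → t ≤ k → 0 ≤ Z t + μ t ∧ Z t + μ t ≤ c t) ∧
      (∃ t, 1 ≤ t ∧ t ≤ k ∧ (Z t + μ t = 0 ∨ Z t + μ t = c t)) ∧
      p 1 * μ 1 + p k * μ k ≤ 0 := by
  obtain ⟨μ, hne, hjob, hmachine, hrest⟩ := stmt6_general k (by omega) p c Z hZ
  exact ⟨μ, hne, fun t ht _ _ ↦ hjob t ht (by omega),
    fun t ht h2 _ ↦ hmachine t ht h2 (by omega), hrest⟩
end

section
/- Let J be a finite set of n jobs with profits π_j ≥ 0 and M a finite set of m machines, with processing times p_{i,j} ≥ 0 and assignment costs c_{i,j} ≥ 0, and let T > 0, C ≥ 0, Π ≥ 0. Suppose there exist reals x_{i,j} ∈ [0,1] and y_j ∈ [0,1] satisfying: ∑_{j∈J} π_j·y_j ≥ Π; ∑_{i∈M} x_{i,j} = y_j for every job j; ∑_{i,j} c_{i,j}·x_{i,j} ≤ C; ∑_{j∈J} p_{i,j}·x_{i,j} ≤ T for every machine i; and x_{i,j} = 0 whenever p_{i,j} > T. Then there exists a finitely supported probability distribution over partial assignments σ (functions from subsets S ⊆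 J of the jobs to M) such that: (i) the expected assignment cost E[∑_{j ∈ dom σ} c_{σ(j),j}] is at most C; (ii) the expected profit E[∑_{j ∈ dom σ} π_j] is at least Π; and (iii) every partial assignment σ in the support has makespan at most 2T, i.e., ∑_{j ∈ dom σ : σ(j) = i} p_{i,j} ≤ 2T for every machine i. -/
/-!
On each machine, sort the jobs by decreasing processing time and lay their fractions end to end on a
line cut into unit slots. Every slot then receives total fraction at most one, so the job–slot
fractions form a fractional bipartite matching, which by Birkhoff's theorem is the mean of a random
matching. Reading off the machine of each matched slot gives a random partial assignment with
marginals `x`, so expected cost and profit equal their LP values. A job in slot `s + 1` is no longer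
than the average job of the full slot `s`, so all slots but the first together contribute at most
the fractional load `T`, and the single job of the first slot contributes at most another `T`.
-/

open Finset

section FinitePreliminaries

lemma sum_succ_sub_castSucc {G : Type*} [AddCommGroup G] {n : ℕ} (f : Fin (n + 1) → G) :
    ∑ j : Fin n, (f j.succ - f j.castSucc) = f (Fin.last n) - f 0 := by
  have sum_eq_sum := (Fin.sum_univ_succ f).symm.trans (Fin.sum_univ_castSucc f)
  rw [sum_sub_distrib, sub_eq_sub_iff_add_eq_add, add_comm, sum_eq_sum, add_comm]

lemma exists_equiv_fin_antitone {J α : Type*} [Fintype J] [LinearOrder α] (f : J → α) :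
    ∃ e : Fin (Fintype.card J) ≃ J, Antitone (f ∘ e) :=
  let e := (Fintype.equivFin J).symm
  ⟨(Tuple.sort (OrderDual.toDual ∘ f ∘ e)).trans e,
    Tuple.monotone_sort (OrderDual.toDual ∘ f ∘ e)⟩

lemma sum_le_sum_of_leftUnique {J S K : Type*} [AddCommMonoid K] [PartialOrder K]
    [IsOrderedAddMonoid K] {r : J → S → Prop} (hr : Relator.LeftUnique r) {t : Finset J}
    {u : Finset S} {f : J → K} {g : S → K} (hfg : ∀ j ∈ t, ∃ s ∈ u, r j s ∧ f j ≤ g s)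
    (hg : ∀ s ∈ u, 0 ≤ g s) : ∑ j ∈ t, f j ≤ ∑ s ∈ u, g s := by
  classical
  obtain rfl | ⟨j₀, hj₀⟩ := t.eq_empty_or_nonempty
  · simpa using sum_nonneg hg
  have : Nonempty S := ⟨(hfg j₀ hj₀).choose⟩
  choose! partner mem_u rel le using hfg
  have partner_injOn : Set.InjOn partner t := fun j hj j' hj' h ↦
    hr (rel j hj) (h ▸ rel j' hj')
  calc ∑ j ∈ t, f j ≤ ∑ j ∈ t, g (partner j) := sum_le_sum le
    _ = ∑ s ∈ t.image partner, g s := (sum_image partner_injOn).symm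
    _ ≤ ∑ s ∈ u, g s :=
      sum_le_sum_of_subset_of_nonneg (image_subset_iff.2 mem_u) fun s hs _ ↦ hg s hs

lemma diagonal_nonneg {α K : Type*} [DecidableEq α] [Zero K] [Preorder K] {d : α → K}
    (hd : ∀ a, 0 ≤ d a) (a b : α) : 0 ≤ Matrix.diagonal d a b := by
  rw [Matrix.diagonal_apply]
  split_ifs
  exacts [hd a, le_rfl]

end FinitePreliminaries

section PartialSum

variable {K : Type*} [PartialOrder K] {n : ℕ}

lemma partialSum_monotone [AddCommMonoid K] [IsOrderedAddMonoid K] {x : Fin n → K}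
    (hx : ∀ j, 0 ≤ x j) : Monotone (Fin.partialSum x) :=
  Fin.monotone_iff_le_succ.2 fun j ↦ by
    rw [Fin.partialSum_succ]
    exact le_add_of_nonneg_right (hx j)

lemma partialSum_nonneg [AddCommMonoid K] [IsOrderedAddMonoid K] {x : Fin n → K}
    (hx : ∀ j, 0 ≤ x j) (i : Fin (n + 1)) : 0 ≤ Fin.partialSum x i :=
  (Fin.partialSum_zero x).symm.trans_le (partialSum_monotone hx (Fin.zero_le i))

lemma partialSum_le_val [AddCommMonoidWithOne K] [IsOrderedAddMonoid K] {x : Fin n → K}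
    (hx : ∀ j, x j ≤ 1) (i : Fin (n + 1)) : Fin.partialSum x i ≤ (i : ℕ) := by
  induction i using Fin.induction with
  | zero => simp
  | succ j ih =>
    rw [Fin.partialSum_succ, Fin.val_succ, Nat.cast_succ]
    exact add_le_add ih (hx j)

end PartialSum

section SlotFill

variable {K : Type*} [CommRing K] [LinearOrder K] {s n : ℕ} {t : K}

/-- The length of the part of the unit slot `[s, s + 1]` that the interval `[0, t]` covers. -/
def slotFill (s : ℕ) (t : K) : K := min (max (t - s) 0) 1

lemma slotFill_le_one (s : ℕ) (t : K) : slotFill s t ≤ 1 := min_le_right _ _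

variable [IsStrictOrderedRing K]

lemma slotFill_nonneg (s : ℕ) (t : K) : 0 ≤ slotFill s t :=
  le_min (le_max_right _ _) zero_le_one

lemma slotFill_mono (s : ℕ) : Monotone (slotFill s : K → K) := fun _ _ h ↦
  min_le_min_right _ (max_le_max_right _ (sub_le_sub_right h _))

lemma slotFill_of_le (h : t ≤ s) : slotFill s t = 0 := by
  rw [slotFill, max_eq_right (sub_nonpos.2 h), min_eq_left zero_le_one]

lemma slotFill_of_add_one_le (h : s + 1 ≤ t) : slotFill s t = 1 :=
  min_eq_right (le_max_of_le_left (le_sub_iff_add_le'.2 h))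

lemma slotFill_of_mem_Icc (hs : s ≤ t) (hs' : t ≤ s + 1) : slotFill s t = t - s := by
  rw [slotFill, max_eq_left (sub_nonneg.2 hs), min_eq_left (sub_le_iff_le_add'.2 hs')]

lemma sum_range_slotFill (ht : 0 ≤ t) (n : ℕ) : ∑ s ∈ range n, slotFill s t = min t n := by
  induction n with
  | zero => simp [ht]
  | succ n ih =>
    rw [sum_range_succ, ih, Nat.cast_succ]
    rcases le_total t n with before | after
    · rw [slotFill_of_le before, min_eq_left before, min_eq_left (by linarith), add_zero]
    rcases le_total t (n + 1) with within | beyond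
    · rw [slotFill_of_mem_Icc after within, min_eq_right after, min_eq_left within,
        add_sub_cancel]
    · rw [slotFill_of_add_one_le beyond, min_eq_right after, min_eq_right beyond]

end SlotFill

section SlotShare

variable {K : Type*} [CommRing K] [LinearOrder K] {n : ℕ} {p x : Fin n → K} {j : Fin n} {s : ℕ}

/-- The fraction of job `j` that falls into the unit slot `[s, s + 1]` when the fractions `x` of
the jobs are laid end to end, in order, starting at `0`. -/
def slotShare (x : Fin n → K) (s : ℕ) (j : Fin n) : K :=
  slotFill s (Fin.partialSum x j.succ) - slotFill s (Fin.partialSum x j.castSucc)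

lemma ne_zero_of_slotShare_pos (h : 0 < slotShare x s j) : x j ≠ 0 := by
  intro hxj
  rw [slotShare, Fin.partialSum_succ, hxj, add_zero, sub_self] at h
  exact h.false

variable [IsStrictOrderedRing K]

lemma slotShare_nonneg (hx : ∀ j, 0 ≤ x j) (s : ℕ) (j : Fin n) : 0 ≤ slotShare x s j :=
  sub_nonneg.2 (slotFill_mono s (partialSum_monotone hx j.castSucc_le_succ))

lemma sum_jobs_slotShare (x : Fin n → K) (s : ℕ) :
    ∑ j, slotShare x s j = slotFill s (Fin.partialSum x (Fin.last n)) := by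
  simp only [slotShare]
  rw [sum_succ_sub_castSucc fun i ↦ slotFill s (Fin.partialSum x i), Fin.partialSum_zero,
    slotFill_of_le s.cast_nonneg, sub_zero]

lemma sum_slots_slotShare (hx0 : ∀ j, 0 ≤ x j) (hx1 : ∀ j, x j ≤ 1) {m : ℕ} (hm : n ≤ m)
    (j : Fin n) : ∑ s : Fin m, slotShare x s j = x j := by
  have partialSum_le_m (i : Fin (n + 1)) : Fin.partialSum x i ≤ m :=
    (partialSum_le_val hx1 i).trans (Nat.cast_le.2 (i.is_le.trans hm))
  have sum_slotFill (i : Fin (n + 1)) :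
      ∑ s : Fin m, slotFill s (Fin.partialSum x i) = Fin.partialSum x i := by
    rw [Fin.sum_univ_eq_sum_range (fun s ↦ slotFill s (Fin.partialSum x i)),
      sum_range_slotFill (partialSum_nonneg hx0 i), min_eq_left (partialSum_le_m i)]
  simp only [slotShare, sum_sub_distrib, sum_slotFill]
  rw [Fin.partialSum_succ, add_sub_cancel_left]

lemma lt_partialSum_succ_of_slotShare_pos (h : 0 < slotShare x s j) :
    s < Fin.partialSum x j.succ := by
  by_contra! hle
  rw [slotShare, slotFill_of_le hle, zero_sub, neg_pos] at h
  exact h.not_ge (slotFill_nonneg _ _)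

lemma slotShare_eq_zero_of_add_one_le (hx : ∀ j, 0 ≤ x j)
    (h : s + 1 ≤ Fin.partialSum x j.castSucc) : slotShare x s j = 0 := by
  rw [slotShare, slotFill_of_add_one_le h, slotFill_of_add_one_le
    (h.trans (partialSum_monotone hx j.castSucc_le_succ)), sub_self]

-- A job reaching slot `s + 1` ends after slot `s`, which is thus filled completely by jobs that are
-- at least as long.
lemma le_sum_mul_slotShare_of_slotShare_succ_pos (hp : Antitone p) (hx : ∀ j, 0 ≤ x j)
    (h : 0 < slotShare x (s + 1) j) : p j ≤ ∑ k, p k * slotShare x s k := by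
  have end_le : s + 1 ≤ Fin.partialSum x j.succ := by
    exact_mod_cast (lt_partialSum_succ_of_slotShare_pos h).le
  have slot_full : ∑ k, slotShare x s k = 1 := by
    rw [sum_jobs_slotShare,
      slotFill_of_add_one_le (end_le.trans (partialSum_monotone hx (Fin.le_last _)))]
  calc p j = ∑ k, p j * slotShare x s k := by rw [← mul_sum, slot_full, mul_one]
    _ ≤ ∑ k, p k * slotShare x s k := sum_le_sum fun k _ ↦ ?_
  rcases le_or_gt k j with hkj | hjk
  · exact mul_le_mul_of_nonneg_right (hp hkj) (slotShare_nonneg hx s k)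
  · have start_ge : s + 1 ≤ Fin.partialSum x k.castSucc :=
      end_le.trans (partialSum_monotone hx (Fin.succ_le_castSucc_iff.2 hjk))
    simp only [slotShare_eq_zero_of_add_one_le hx start_ge, mul_zero, le_refl]

end SlotShare

section SlotSplitting

variable {J S K : Type*} [Fintype J] [Fintype S] [Semiring K] [PartialOrder K]

/-- A splitting, as in the Shmoys–Tardos construction, of the fractions `x` of the jobs on one
machine among unit-capacity slots: slot `s` holds the fraction `A s j` of job `j`, and `B s` bounds
the processing times `p j` of the jobs that it holds. -/
structure IsSlotSplitting (p x : J → K) (A : S → J → K) (B : S → K) : Prop where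
  nonneg : ∀ s j, 0 ≤ A s j
  sum_slots : ∀ j, ∑ s, A s j = x j
  sum_jobs_le_one : ∀ s, ∑ j, A s j ≤ 1
  bound_nonneg : ∀ s, 0 ≤ B s
  le_bound : ∀ s j, 0 < A s j → p j ≤ B s

lemma IsSlotSplitting.of_comp_equiv {I : Type*} [Fintype I] {p x : J → K} (e : I ≃ J)
    {A : S → I → K} {B : S → K} (h : IsSlotSplitting (p ∘ e) (x ∘ e) A B) :
    IsSlotSplitting p x (fun s j ↦ A s (e.symm j)) B where
  nonneg s j := h.nonneg s _
  sum_slots j := by simpa using h.sum_slots (e.symm j)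
  sum_jobs_le_one s := (Equiv.sum_comp e.symm (A s)).trans_le (h.sum_jobs_le_one s)
  bound_nonneg := h.bound_nonneg
  le_bound s j hj := by simpa using h.le_bound s (e.symm j) hj

end SlotSplitting

section SlotBound

variable {J K : Type*} [Fintype J] [CommRing K] [LinearOrder K]

/-- The length bound of a slot in the Shmoys–Tardos construction: a given bound `P` on
all processing times for slot `0`, and the fractional load of slot `s` for slot `s + 1`. -/
def slotBound {n : ℕ} (P : K) (p x : Fin n → K) : Fin (n + 1) → K :=
  Fin.cons P fun s : Fin n ↦ ∑ j, p j * slotShare x s j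

variable [IsStrictOrderedRing K]

lemma sum_slotBound {n : ℕ} (P : K) (p : Fin n → K) {x : Fin n → K} (hx0 : ∀ j, 0 ≤ x j)
    (hx1 : ∀ j, x j ≤ 1) : ∑ s, slotBound P p x s = P + ∑ j, p j * x j := by
  rw [slotBound, Fin.sum_cons, sum_comm]
  simp only [← mul_sum, sum_slots_slotShare hx0 hx1 le_rfl]

lemma isSlotSplitting_slotShare {n : ℕ} {P : K} {p x : Fin n → K} (hanti : Antitone p)
    (hp : ∀ j, 0 ≤ p j) (hP : 0 ≤ P) (hx0 : ∀ j, 0 ≤ x j) (hx1 : ∀ j, x j ≤ 1)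
    (hpP : ∀ j, x j ≠ 0 → p j ≤ P) :
    IsSlotSplitting p x (fun s : Fin (n + 1) ↦ slotShare x s) (slotBound P p x) where
  nonneg s := slotShare_nonneg hx0 s
  sum_slots := sum_slots_slotShare hx0 hx1 n.le_succ
  sum_jobs_le_one s := (sum_jobs_slotShare x s).trans_le (slotFill_le_one _ _)
  bound_nonneg := Fin.cases hP fun s ↦
    show 0 ≤ ∑ j, p j * slotShare x s j from
      sum_nonneg fun j _ ↦ mul_nonneg (hp j) (slotShare_nonneg hx0 s j)
  le_bound := Fin.cases (fun j h ↦ hpP j (ne_zero_of_slotShare_pos h)) fun _ _ h ↦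
    le_sum_mul_slotShare_of_slotShare_succ_pos hanti hx0 (by simpa using h)

lemma exists_isSlotSplitting {P : K} {p x : J → K} (hp : ∀ j, 0 ≤ p j) (hP : 0 ≤ P)
    (hx0 : ∀ j, 0 ≤ x j) (hx1 : ∀ j, x j ≤ 1) (hpP : ∀ j, x j ≠ 0 → p j ≤ P) :
    ∃ (A : Fin (Fintype.card J + 1) → J → K) (B : Fin (Fintype.card J + 1) → K),
      IsSlotSplitting p x A B ∧ ∑ s, B s = P + ∑ j, p j * x j := by
  obtain ⟨e, hanti⟩ := exists_equiv_fin_antitone p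
  refine ⟨_, _, (isSlotSplitting_slotShare hanti (fun _ ↦ hp _) hP (fun _ ↦ hx0 _)
    (fun _ ↦ hx1 _) fun _ ↦ hpP _).of_comp_equiv e, ?_⟩
  rw [sum_slotBound P _ (fun _ ↦ hx0 _) fun _ ↦ hx1 _]
  exact congrArg (P + ·) (Equiv.sum_comp e fun j ↦ p j * x j)

end SlotBound

section Rounding

variable {J M ι K : Type*} [Fintype ι] [DecidableEq M]

/-- A randomized rounding of the fractional assignment `x`: the partial assignment `σ k` is drawn
with probability `q k`, and it assigns `j` to `i` with probability exactly `x i j`. -/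
structure IsRounding [Semiring K] [PartialOrder K] (x : M → J → K) (q : ι → K)
    (σ : ι → J → Option M) : Prop where
  mem_stdSimplex : q ∈ stdSimplex K ι
  marginal : ∀ i j, ∑ k with σ k j = some i, q k = x i j

namespace IsRounding

lemma comp_equiv [Semiring K] [PartialOrder K] {κ : Type*} [Fintype κ] {x : M → J → K} {q : ι → K}
    {σ : ι → J → Option M} (h : IsRounding x q σ) (e : κ ≃ ι) : IsRounding x (q ∘ e) (σ ∘ e) where
  mem_stdSimplex := ⟨fun _ ↦ h.mem_stdSimplex.1 _,
    (Equiv.sum_comp e q).trans h.mem_stdSimplex.2⟩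
  marginal i j := by
    simp only [← h.marginal i j, sum_filter]
    exact Equiv.sum_comp e fun k ↦ if σ k j = some i then q k else 0

lemma pos_of_eq_some [Semiring K] [PartialOrder K] [IsOrderedAddMonoid K] {x : M → J → K}
    {q : ι → K} {σ : ι → J → Option M} (h : IsRounding x q σ) {k : ι} (hk : q k ≠ 0) {i : M}
    {j : J} (hσ : σ k j = some i) : 0 < x i j := by
  rw [← h.marginal i j]
  exact ((h.mem_stdSimplex.1 k).lt_of_ne' hk).trans_le
    (single_le_sum (fun k _ ↦ h.mem_stdSimplex.1 k) (by simpa using hσ))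

lemma map_fst [Semiring K] [PartialOrder K] {S : Type*} [Fintype S] [DecidableEq S]
    {A : M × S → J → K} {q : ι → K} {μ : ι → J → Option (M × S)} (h : IsRounding A q μ) :
    IsRounding (fun i j ↦ ∑ s, A (i, s) j) q fun k j ↦ (μ k j).map Prod.fst where
  mem_stdSimplex := h.mem_stdSimplex
  marginal i j := by
    simp only [← h.marginal, sum_filter]
    rw [sum_comm]
    refine sum_congr rfl fun k _ ↦ ?_
    rcases μ k j with _ | ⟨i', s'⟩
    · simp
    · by_cases hi : i' = i <;> simp [hi]

lemma expectation_eq [CommSemiring K] [PartialOrder K] [Fintype J] [Fintype M] {x : M → J → K}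
    {q : ι → K} {σ : ι → J → Option M} (h : IsRounding x q σ) (g : M → J → K) :
    ∑ k, q k * ∑ j, (σ k j).elim 0 (g · j) = ∑ i, ∑ j, g i j * x i j := by
  have elim_eq_sum (k : ι) (j : J) :
      (σ k j).elim 0 (g · j) = ∑ i, if σ k j = some i then g i j else 0 := by
    rcases σ k j with _ | i <;> simp
  calc ∑ k, q k * ∑ j, (σ k j).elim 0 (g · j)
      = ∑ j, ∑ i, ∑ k, if σ k j = some i then g i j * q k else 0 := by
        simp only [elim_eq_sum, mul_sum, mul_ite, mul_zero, mul_comm (g _ _)]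
        rw [sum_comm]
        exact sum_congr rfl fun j _ ↦ sum_comm
    _ = ∑ j, ∑ i, g i j * x i j := by
        simp only [← h.marginal, mul_sum, sum_filter, mul_ite, mul_zero]
    _ = ∑ i, ∑ j, g i j * x i j := sum_comm

end IsRounding

end Rounding

section Matching

variable {J S K : Type*}

/-- The matching between `J` and `S` consisting of the pairs `(j, s)` such that the permutation `τ`
of the disjoint union `J ⊕ S` sends `j` to `s`. -/
def matchingOfPerm (τ : Equiv.Perm (J ⊕ S)) : J ≃. S where
  toFun j := (τ (.inl j)).getRight?
  invFun s := (τ.symm (.inr s)).getLeft?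
  inv j s := by
    simp only [Sum.getLeft?_eq_some_iff, Sum.getRight?_eq_some_iff]
    rw [Equiv.symm_apply_eq, eq_comm]

lemma matchingOfPerm_eq_some_iff {τ : Equiv.Perm (J ⊕ S)} {j : J} {s : S} :
    matchingOfPerm τ j = some s ↔ τ (.inl j) = .inr s :=
  Sum.getRight?_eq_some_iff

variable [Fintype J] [Fintype S] [DecidableEq S]

/-- The completion of a fractional bipartite matching `A` to a doubly stochastic matrix on the
disjoint union of its two sides: the missing mass of each vertex is placed on the diagonal. -/
def matchingCompletion [DecidableEq J] [Ring K] (A : Matrix S J K) : Matrix (J ⊕ S) (J ⊕ S) K :=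
  .fromBlocks (.diagonal fun j ↦ 1 - ∑ s, A s j) A.transpose A (.diagonal fun s ↦ 1 - ∑ j, A s j)

lemma matchingCompletion_mem_doublyStochastic [DecidableEq J] [Ring K] [PartialOrder K]
    [IsOrderedRing K] {A : Matrix S J K} (h0 : ∀ s j, 0 ≤ A s j) (hS : ∀ s, ∑ j, A s j ≤ 1)
    (hJ : ∀ j, ∑ s, A s j ≤ 1) : matchingCompletion A ∈ doublyStochastic K (J ⊕ S) := by
  refine mem_doublyStochastic_iff_sum.2 ⟨?_, ?_, ?_⟩
  · rintro (j | s) (j' | s')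
    · exact diagonal_nonneg (fun j ↦ sub_nonneg.2 (hJ j)) j j'
    · exact h0 s' j
    · exact h0 s j'
    · exact diagonal_nonneg (fun s ↦ sub_nonneg.2 (hS s)) s s'
  · rintro (j | s) <;> simp [matchingCompletion, Matrix.diagonal_apply]
  · rintro (j | s) <;> simp [matchingCompletion, Matrix.diagonal_apply]

lemma exists_isRounding_pequiv [Field K] [LinearOrder K] [IsStrictOrderedRing K] {A : S → J → K}
    (h0 : ∀ s j, 0 ≤ A s j) (hS : ∀ s, ∑ j, A s j ≤ 1) (hJ : ∀ j, ∑ s, A s j ≤ 1) :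
    ∃ (N : ℕ) (q : Fin N → K) (μ : Fin N → J ≃. S), IsRounding A q fun k ↦ μ k := by
  classical
  obtain ⟨w, w_nonneg, w_sum, w_eq⟩ := exists_eq_sum_perm_of_mem_doublyStochastic
    (matchingCompletion_mem_doublyStochastic (A := .of A) h0 hS hJ)
  have rounding : IsRounding A w fun τ ↦ matchingOfPerm τ := by
    refine ⟨⟨w_nonneg, w_sum⟩, fun s j ↦ ?_⟩
    have entry := congrFun₂ w_eq (.inl j) (.inr s)
    simp only [matchingOfPerm_eq_some_iff, sum_filter]
    simpa [matchingCompletion, Matrix.sum_apply, Equiv.Perm.permMatrix, PEquiv.toMatrix_apply,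
      Equiv.toPEquiv_apply] using entry
  exact ⟨_, _, _, rounding.comp_equiv (Fintype.equivFin _).symm⟩

end Matching

section PartialGAP

variable {J M K : Type*} [Fintype J] [Fintype M] [DecidableEq M] [Field K] [LinearOrder K]
  [IsStrictOrderedRing K]

lemma exists_isRounding_load_le {p x : M → J → K} {P : M → K} (hp : ∀ i j, 0 ≤ p i j)
    (hP : ∀ i, 0 ≤ P i) (hx : ∀ i j, 0 ≤ x i j) (hsum : ∀ j, ∑ i, x i j ≤ 1)
    (hpP : ∀ i j, x i j ≠ 0 → p i j ≤ P i) :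
    ∃ (N : ℕ) (q : Fin N → K) (σ : Fin N → J → Option M), IsRounding x q σ ∧
      ∀ k, q k ≠ 0 → ∀ i, ∑ j with σ k j = some i, p i j ≤ P i + ∑ j, p i j * x i j := by
  classical
  have hx1 (i : M) (j : J) : x i j ≤ 1 :=
    (single_le_sum (fun i _ ↦ hx i j) (mem_univ i)).trans (hsum j)
  choose A B splitting sum_bound using fun i ↦
    exists_isSlotSplitting (hp i) (hP i) (hx i) (hx1 i) (hpP i)
  obtain ⟨N, q, μ, rounding⟩ := exists_isRounding_pequiv
    (A := fun (s : M × Fin (Fintype.card J + 1)) j ↦ A s.1 s.2 j)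
    (fun s ↦ (splitting s.1).nonneg s.2) (fun s ↦ (splitting s.1).sum_jobs_le_one s.2)
    fun j ↦ by simpa only [Fintype.sum_prod_type, (splitting _).sum_slots] using hsum j
  refine ⟨N, q, fun k j ↦ (μ k j).map Prod.fst, ?_, fun k hk i ↦ ?_⟩
  · simpa only [(splitting _).sum_slots] using rounding.map_fst
  · rw [← sum_bound i]
    refine sum_le_sum_of_leftUnique (r := fun j s ↦ μ k j = some (i, s))
      (fun _ _ _ ↦ (μ k).inj) (fun j hj ↦ ?_) fun s _ ↦ (splitting i).bound_nonneg s
    obtain ⟨s, hs⟩ : ∃ s, μ k j = some (i, s) := by simpa using hj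
    exact ⟨s, mem_univ s, hs, (splitting i).le_bound s j (rounding.pos_of_eq_some hk hs)⟩

theorem stmt14_general (π : J → K) (p : M → J → K) (hp : ∀ i j, 0 ≤ p i j) (c : M → J → K)
    (T : M → K) (C Pt : K) (x : M → J → K) (y : J → K) (hx : ∀ i j, 0 ≤ x i j) (hy : ∀ j, y j ≤ 1)
    (hprofit : Pt ≤ ∑ j, π j * y j) (hassign : ∀ j, ∑ i, x i j = y j)
    (hcost : ∑ i, ∑ j, c i j * x i j ≤ C) (hload : ∀ i, ∑ j, p i j * x i j ≤ T i)
    (hbig : ∀ i j, T i < p i j → x i j = 0) :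
    ∃ (N : ℕ) (q : Fin N → K) (σ : Fin N → J → Option M),
      (∀ k, 0 ≤ q k) ∧ (∑ k, q k = 1) ∧
      (∑ k, q k * ∑ j, (σ k j).elim 0 (fun i ↦ c i j)) ≤ C ∧
      Pt ≤ (∑ k, q k * ∑ j, (σ k j).elim 0 (fun _ ↦ π j)) ∧
      (∀ k, q k ≠ 0 → ∀ i : M, ∑ j with σ k j = some i, p i j ≤ 2 * T i) := by
  have hT (i : M) : 0 ≤ T i :=
    (sum_nonneg fun j _ ↦ mul_nonneg (hp i j) (hx i j)).trans (hload i)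
  obtain ⟨N, q, σ, rounding, load_le⟩ := exists_isRounding_load_le hp hT hx
    (fun j ↦ (hassign j).trans_le (hy j)) fun i j ↦ not_imp_comm.1 fun h ↦ hbig i j (not_le.1 h)
  refine ⟨N, q, σ, rounding.mem_stdSimplex.1, rounding.mem_stdSimplex.2,
    (rounding.expectation_eq c).trans_le hcost, ?_, fun k hk i ↦ ?_⟩
  · rw [rounding.expectation_eq fun _ ↦ π, sum_comm]
    simpa only [← mul_sum, hassign] using hprofit
  · rw [two_mul]
    exact (load_le k hk i).trans (add_le_add_right (hload i) (T i))

end PartialGAP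

/-- Partial GAP. If the LP relaxation (with profits `π`, costs `c`,
processing times `p`, makespan budget `T`, cost budget `C`, profit target `Pt`) is
feasible, then there is a finitely supported probability distribution over partial
assignments (modelled as `J → Option M`) whose expected assignment cost is at most `C`,
whose expected profit is at least `Pt`, and every partial assignment in the support has
makespan at most `2T`. -/
theorem stmt14 {J M : Type*} [Fintype J] [Fintype M] [DecidableEq M]
    (π : J → ℝ) (hπ : ∀ j, 0 ≤ π j)
    (p : M → J → ℝ) (hp : ∀ i j, 0 ≤ p i j)
    (c : M → J → ℝ) (hc : ∀ i j, 0 ≤ c i j)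
    (T C Pt : ℝ) (hT : 0 < T) (hC : 0 ≤ C) (hPt : 0 ≤ Pt)
    (x : M → J → ℝ) (y : J → ℝ)
    (hx01 : ∀ i j, 0 ≤ x i j ∧ x i j ≤ 1)
    (hy01 : ∀ j, 0 ≤ y j ∧ y j ≤ 1)
    (hprofit : Pt ≤ ∑ j, π j * y j)
    (hassign : ∀ j, ∑ i, x i j = y j)
    (hcost : ∑ i, ∑ j, c i j * x i j ≤ C)
    (hload : ∀ i, ∑ j, p i j * x i j ≤ T)
    (hbig : ∀ i j, T < p i j → x i j = 0) :
    ∃ (N : ℕ) (q : Fin N → ℝ) (σ : Fin N → J → Option M),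
      (∀ k, 0 ≤ q k) ∧ (∑ k, q k = 1) ∧
      -- (i) expected assignment cost at most C
      (∑ k, q k * ∑ j, (σ k j).elim 0 (fun i => c i j)) ≤ C ∧
      -- (ii) expected profit at least Pt
      Pt ≤ (∑ k, q k * ∑ j, (σ k j).elim 0 (fun _ => π j)) ∧
      -- (iii) every assignment in the support has makespan at most 2T
      (∀ k, q k ≠ 0 → ∀ i : M,
        (∑ j ∈ Finset.univ.filter (fun j => σ k j = some i), p i j) ≤ 2 * T) :=
  stmt14_general π p hp c (fun _ ↦ T) C Pt x y (fun i j ↦ (hx01 i j).1) (fun j ↦ (hy01 j).2)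
    hprofit hassign hcost hload hbig
end
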